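/- arXiv:2308.07138 — 5 statements merged into one kernel-verified Lean document; each statement's English description precedes it below -/
import Mathlib

section
/- Let N ≥ 2 be an integer and define the linear map T_{0,0} : ℝ^{N−1} → ℝ^N by (T_{0,0}v)_1 = (T_{0,0}v)_N = 0 and (T_{0,0}v)_i = v_i − v_{i−1} for 2 ≤ i ≤ N−1. Then the restriction of T_{0,0} to the subspace ℝ^{N−1}_{↕−} = {v ∈ ℝ^{N−1} : v_i = −v_{N−i} for all i} is a linear bijection onto the subspace ℝ^{N,0,0}_{↕+} = {w ∈ ℝ^N : w_1 = w_N = 0 and w_i = w_{N+1−i} for all i}. -/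
noncomputable section

/-- Forward difference map `ℝ^{d+1} → ℝ^d`, `(T v)_i = v_{i+1} - v_i` for `1 ≤ i ≤ d`
(vectors are encoded as functions `ℕ → ℝ` indexed by `1,…,d`, vanishing elsewhere). -/
def Dmap (d : ℕ) : (ℕ → ℝ) →ₗ[ℝ] (ℕ → ℝ) where
  toFun v := fun i => if 1 ≤ i ∧ i ≤ d then v (i + 1) - v i else 0
  map_add' v w := by
    funext i
    by_cases h : 1 ≤ i ∧ i ≤ d <;> simp [h] <;> ring
  map_smul' c v := by
    funext i
    by_cases h : 1 ≤ i ∧ i ≤ d <;> simp [h] <;> ring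

/-- The map `T₀₀ : ℝ^{N-1} → ℝ^N`, `(T₀₀ v)_1 = (T₀₀ v)_N = 0` and
`(T₀₀ v)_i = v_i - v_{i-1}` for `2 ≤ i ≤ N - 1`. -/
def T00map (N : ℕ) : (ℕ → ℝ) →ₗ[ℝ] (ℕ → ℝ) where
  toFun v := fun i => if 2 ≤ i ∧ i ≤ N - 1 then v i - v (i - 1) else 0
  map_add' v w := by
    funext i
    by_cases h : 2 ≤ i ∧ i ≤ N - 1 <;> simp [h] <;> ring
  map_smul' c v := by
    funext i
    by_cases h : 2 ≤ i ∧ i ≤ N - 1 <;> simp [h] <;> ring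

/-- The map `S : ℝ^{N,0,0} → ℝ^{N-1}`, `(S v)_i = v_i + v_{i+1}` for `1 ≤ i ≤ N - 1`. -/
def Smap (N : ℕ) : (ℕ → ℝ) →ₗ[ℝ] (ℕ → ℝ) where
  toFun v := fun i => if 1 ≤ i ∧ i ≤ N - 1 then v i + v (i + 1) else 0
  map_add' v w := by
    funext i
    by_cases h : 1 ≤ i ∧ i ≤ N - 1 <;> simp [h] <;> ring
  map_smul' c v := by
    funext i
    by_cases h : 1 ≤ i ∧ i ≤ N - 1 <;> simp [h] <;> ring

/-- The map `F : ℝ^{N-2} → ℝ^{N-1}`, `(F v)_i = -x_{i-1} v_{i-1} + x_{i+1} v_i` for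
`1 ≤ i ≤ N - 1` (with the conventions `v_0 = v_{N-1} = 0` holding automatically for
vectors encoded with support in `1,…,N-2`). -/
def Fmap (N : ℕ) (x : ℕ → ℝ) : (ℕ → ℝ) →ₗ[ℝ] (ℕ → ℝ) where
  toFun v := fun i => if 1 ≤ i ∧ i ≤ N - 1 then -x (i - 1) * v (i - 1) + x (i + 1) * v i else 0
  map_add' v w := by
    funext i
    by_cases h : 1 ≤ i ∧ i ≤ N - 1 <;> simp [h] <;> ring
  map_smul' c v := by
    funext i
    by_cases h : 1 ≤ i ∧ i ≤ N - 1 <;> simp [h] <;> ring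

/-- The subspace `ℝ^d_{↕ε}` of vectors (encoded as functions `ℕ → ℝ` indexed by `1,…,d`,
vanishing at all other indices) satisfying `v_i = ε · v_{d+1-i}` for `1 ≤ i ≤ d`. -/
def symSub (d : ℕ) (ε : ℝ) : Submodule ℝ (ℕ → ℝ) where
  carrier := {v | (∀ i, i = 0 ∨ d < i → v i = 0) ∧
    ∀ i, 1 ≤ i → i ≤ d → v i = ε * v (d + 1 - i)}
  zero_mem' := ⟨fun _ _ => rfl, fun _ _ _ => by simp⟩
  add_mem' := by
    rintro v w ⟨hv0, hv⟩ ⟨hw0, hw⟩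
    refine ⟨fun i hi => ?_, fun i h1 h2 => ?_⟩
    · simp [hv0 i hi, hw0 i hi]
    · simp only [Pi.add_apply]
      rw [hv i h1 h2, hw i h1 h2]; ring
  smul_mem' := by
    rintro c v ⟨hv0, hv⟩
    refine ⟨fun i hi => ?_, fun i h1 h2 => ?_⟩
    · simp [hv0 i hi]
    · simp only [Pi.smul_apply, smul_eq_mul]
      rw [hv i h1 h2]; ring

/-- The subspace `ℝ^{N,0,0}_{↕+}` of vectors (encoded as functions `ℕ → ℝ` indexed by
`1,…,N`, vanishing at all other indices) with `w_1 = w_N = 0` and `w_i = w_{N+1-i}`. -/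
def sub00 (N : ℕ) : Submodule ℝ (ℕ → ℝ) where
  carrier := {w | (∀ i, i = 0 ∨ N < i → w i = 0) ∧ w 1 = 0 ∧ w N = 0 ∧
    ∀ i, 1 ≤ i → i ≤ N → w i = w (N + 1 - i)}
  zero_mem' := ⟨fun _ _ => rfl, rfl, rfl, fun _ _ _ => rfl⟩
  add_mem' := by
    rintro v w ⟨hv0, hv1, hvN, hv⟩ ⟨hw0, hw1, hwN, hw⟩
    refine ⟨fun i hi => ?_, ?_, ?_, fun i h1 h2 => ?_⟩
    · simp [hv0 i hi, hw0 i hi]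
    · simp [hv1, hw1]
    · simp [hvN, hwN]
    · simp only [Pi.add_apply]
      rw [hv i h1 h2, hw i h1 h2]
  smul_mem' := by
    rintro c v ⟨hv0, hv1, hvN, hv⟩
    refine ⟨fun i hi => ?_, ?_, ?_, fun i h1 h2 => ?_⟩
    · simp [hv0 i hi]
    · simp [hv1]
    · simp [hvN]
    · simp only [Pi.smul_apply, smul_eq_mul]
      rw [hv i h1 h2]

end

/-!
The inverse of `T00map N` is discrete integration. A vector is determined by its differences up
to an additive constant, and antisymmetry fixes that constant: the partial sums `P i` of a
symmetric `w` satisfy `P i + P (N - i) = P N`, so they become antisymmetric exactly after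
subtracting `P N / 2`.
-/

theorem sum_Ico_add_sum_Ico_of_symm {M : Type*} [AddCommMonoid M] {N i : ℕ} {w : ℕ → M}
    (hw : ∀ k, 1 ≤ k → k ≤ N → w k = w (N + 1 - k)) (hi : i ≤ N) :
    ∑ k ∈ Finset.Ico 1 (i + 1), w k + ∑ k ∈ Finset.Ico 1 (N - i + 1), w k =
      ∑ k ∈ Finset.Ico 1 (N + 1), w k := by
  have head_eq_tail : ∑ k ∈ Finset.Ico 1 (i + 1), w k =
      ∑ k ∈ Finset.Ico (N - i + 1) (N + 1), w k := calc
    _ = ∑ k ∈ Finset.Ico 1 (i + 1), w (N + 1 - k) := Finset.sum_congr rfl fun k hk => by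
      rw [Finset.mem_Ico] at hk
      exact hw k hk.1 (by omega)
    _ = ∑ k ∈ Finset.Ico (N + 1 + 1 - (i + 1)) (N + 1 + 1 - 1), w k :=
      Finset.sum_Ico_reflect w 1 (by omega)
    _ = _ := by congr 2; omega
  rw [head_eq_tail, add_comm]
  exact Finset.sum_Ico_consecutive w (by omega) (by omega)

theorem T00map_apply_of_le {N i : ℕ} (v : ℕ → ℝ) (h2 : 2 ≤ i) (hi : i ≤ N - 1) :
    T00map N v i = v i - v (i - 1) :=
  if_pos ⟨h2, hi⟩

theorem T00map_apply_eq_zero {N i : ℕ} (v : ℕ → ℝ) (hi : ¬(2 ≤ i ∧ i ≤ N - 1)) :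
    T00map N v i = 0 :=
  if_neg hi

theorem sum_Ico_T00map {N i : ℕ} (v : ℕ → ℝ) (h1 : 1 ≤ i) (hi : i ≤ N - 1) :
    ∑ k ∈ Finset.Ico 1 (i + 1), T00map N v k = v i - v 1 := by
  induction i, h1 using Nat.le_induction with
  | base => simp [T00map_apply_eq_zero]
  | succ i h1 ih =>
    rw [Finset.sum_Ico_succ_top (by omega), ih (by omega), T00map_apply_of_le v (by omega) hi,
      Nat.add_sub_cancel]
    ring

theorem T00map_mem_sub00 {N : ℕ} {v : ℕ → ℝ} (hv : v ∈ symSub (N - 1) (-1)) :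
    T00map N v ∈ sub00 N := by
  refine ⟨fun i hi => T00map_apply_eq_zero v (by omega), T00map_apply_eq_zero v (by omega),
    T00map_apply_eq_zero v (by omega), fun i h1 hN => ?_⟩
  by_cases hi : 2 ≤ i ∧ i ≤ N - 1
  · have antisymm_i : v i = -1 * v (N + 1 - i - 1) := by
      convert hv.2 i h1 hi.2 using 3; omega
    have antisymm_pred : v (i - 1) = -1 * v (N + 1 - i) := by
      convert hv.2 (i - 1) (by omega) (by omega) using 3; omega
    rw [T00map_apply_of_le v hi.1 hi.2, T00map_apply_of_le v (by omega) (by omega), antisymm_i,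
      antisymm_pred]
    ring
  · rw [T00map_apply_eq_zero v hi, T00map_apply_eq_zero v (by omega)]

/-- The discrete primitive of `w` on `1, …, N - 1`, with the constant of integration chosen to make
it antisymmetric when `w` is symmetric on `1, …, N`; it inverts `T00map N`. As for all vectors
here, it is extended by zero to the other indices. -/
noncomputable def antisymPrimitive (N : ℕ) (w : ℕ → ℝ) (i : ℕ) : ℝ :=
  if 1 ≤ i ∧ i ≤ N - 1 then
    ∑ k ∈ Finset.Ico 1 (i + 1), w k - (∑ k ∈ Finset.Ico 1 (N + 1), w k) / 2
  else 0

theorem antisymPrimitive_apply_of_le {N i : ℕ} (w : ℕ → ℝ) (h1 : 1 ≤ i) (hi : i ≤ N - 1) :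
    antisymPrimitive N w i =
      ∑ k ∈ Finset.Ico 1 (i + 1), w k - (∑ k ∈ Finset.Ico 1 (N + 1), w k) / 2 :=
  if_pos ⟨h1, hi⟩

theorem antisymPrimitive_apply_eq_zero {N i : ℕ} (w : ℕ → ℝ) (hi : i = 0 ∨ N - 1 < i) :
    antisymPrimitive N w i = 0 :=
  if_neg (by omega)

theorem antisymPrimitive_mem_symSub {N : ℕ} {w : ℕ → ℝ}
    (hw : ∀ k, 1 ≤ k → k ≤ N → w k = w (N + 1 - k)) :
    antisymPrimitive N w ∈ symSub (N - 1) (-1) := by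
  refine ⟨fun i => antisymPrimitive_apply_eq_zero w, fun i h1 hi => ?_⟩
  rw [show N - 1 + 1 - i = N - i by omega, antisymPrimitive_apply_of_le w h1 hi,
    antisymPrimitive_apply_of_le w (by omega) (by omega),
    ← sum_Ico_add_sum_Ico_of_symm hw (show i ≤ N by omega)]
  ring

theorem antisymPrimitive_T00map {N : ℕ} {v : ℕ → ℝ} (hv : v ∈ symSub (N - 1) (-1)) :
    antisymPrimitive N (T00map N v) = v := by
  funext i
  by_cases hi : 1 ≤ i ∧ i ≤ N - 1
  · have total : ∑ k ∈ Finset.Ico 1 (N + 1), T00map N v k = v (N - 1) - v 1 := by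
      rw [Finset.sum_Ico_succ_top (by omega), T00map_apply_eq_zero v (by omega), add_zero,
        ← sum_Ico_T00map v (by omega) le_rfl, Nat.sub_add_cancel (by omega)]
    have antisymm_one : v 1 = -1 * v (N - 1) := hv.2 1 le_rfl (by omega)
    rw [antisymPrimitive_apply_of_le _ hi.1 hi.2, sum_Ico_T00map v hi.1 hi.2, total, antisymm_one]
    ring
  · rw [antisymPrimitive_apply_eq_zero _ (by omega), hv.1 i (by omega)]

theorem T00map_antisymPrimitive {N : ℕ} {w : ℕ → ℝ} (hw : w ∈ sub00 N) :
    T00map N (antisymPrimitive N w) = w := by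
  obtain ⟨w_outside, w_one, w_N, -⟩ := hw
  funext i
  by_cases hi : 2 ≤ i ∧ i ≤ N - 1
  · rw [T00map_apply_of_le _ hi.1 hi.2, antisymPrimitive_apply_of_le w (by omega) hi.2,
      antisymPrimitive_apply_of_le w (by omega) (by omega), Nat.sub_add_cancel (by omega),
      Finset.sum_Ico_succ_top (by omega)]
    ring
  · rw [T00map_apply_eq_zero _ hi]
    obtain outside | rfl | rfl : (i = 0 ∨ N < i) ∨ i = 1 ∨ i = N := by omega
    exacts [(w_outside i outside).symm, w_one.symm, w_N.symm]

/-- The restriction of the map `T₀₀ : ℝ^{N-1} → ℝ^N` to the subspace `ℝ^{N-1}_{↕-}` is a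
(linear) bijection onto the subspace `ℝ^{N,0,0}_{↕+}`. -/
theorem T00map_bijOn_antisym_sub00 (N : ℕ) (hN : 2 ≤ N) :
    Set.BijOn (T00map N) (symSub (N - 1) (-1) : Set (ℕ → ℝ)) (sub00 N : Set (ℕ → ℝ)) := by
  have inverse : Set.InvOn (antisymPrimitive N) (T00map N) (symSub (N - 1) (-1)) (sub00 N) :=
    ⟨fun _ hv => antisymPrimitive_T00map hv, fun _ hw => T00map_antisymPrimitive hw⟩
  exact inverse.bijOn (fun _ hv => T00map_mem_sub00 hv)
    fun _ ⟨_, _, _, symm⟩ => antisymPrimitive_mem_symSub symm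
end

section
/- Let N ≥ 3 be an integer and let x ∈ ℝ^{N−1} have all entries strictly positive; set x_0 = x_N = 0. Define F : ℝ^{N−2} → ℝ^{N−1} by (Fv)_i = −x_{i−1}·v_{i−1} + x_{i+1}·v_i for 1 ≤ i ≤ N−1, with the conventions v_0 = v_{N−1} = 0. Then the kernel of the transpose map F^⊤ : ℝ^{N−1} → ℝ^{N−2} (equivalently, the orthogonal complement in ℝ^{N−1} of the image of F with respect to the standard inner product) is exactly the one-dimensional line ℝ·x spanned by x. -/
/-!
The `j`-th kernel equation says that the ratios `w_j / x_j` and `w_{j+1} / x_{j+1}` agree, so all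
ratios equal `w_1 / x_1`, and this is the scalar `c` with `w = c x`. Equality of ratios is handled
in cross-multiplied form, where it is transitive through every regular `x_j`.
-/

theorem cross_mul_eq_of_consecutive {R : Type*} [CommSemigroup R] {x w : ℕ → R} {a b : ℕ}
    (hx : ∀ j, a < j → j < b → IsLeftRegular (x j))
    (h : ∀ j, a ≤ j → j < b → x (j + 1) * w j = x j * w (j + 1))
    {i : ℕ} (hai : a ≤ i) (hib : i ≤ b) : x i * w a = x a * w i := by
  induction i, hai using Nat.le_induction with
  | base => rfl
  | succ i hai ih =>
    rcases hai.eq_or_lt with rfl | hai'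
    · exact h a le_rfl hib
    · apply hx i hai' hib
      calc x i * (x (i + 1) * w a) = x (i + 1) * (x i * w a) := mul_left_comm ..
        _ = x (i + 1) * (x a * w i) := by rw [ih (Nat.le_of_succ_le hib)]
        _ = x a * (x (i + 1) * w i) := mul_left_comm ..
        _ = x a * (x i * w (i + 1)) := by rw [h i hai hib]
        _ = x i * (x a * w (i + 1)) := mul_left_comm ..

theorem ker_F_transpose_eq_span_general {R : Type*} [CommRing R] (N : ℕ) (x : ℕ → R)
    (hxvan : ∀ i, i = 0 ∨ N - 1 < i → x i = 0) (hx_one : IsUnit (x 1))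
    (hxreg : ∀ i, 1 < i → i < N - 1 → IsLeftRegular (x i))
    (w : ℕ → R) (hwvan : ∀ i, i = 0 ∨ N - 1 < i → w i = 0) :
    (∀ j, 1 ≤ j → j ≤ N - 2 → x (j + 1) * w j - x j * w (j + 1) = 0) ↔
      ∃ c : R, w = c • x := by
  constructor
  · intro hker
    have hcross {i : ℕ} : 1 ≤ i → i ≤ N - 1 → x i * w 1 = x 1 * w i :=
      cross_mul_eq_of_consecutive hxreg fun j hj hjN ↦ sub_eq_zero.mp (hker j hj (by omega))
    obtain ⟨u, hu⟩ := hx_one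
    refine ⟨↑u⁻¹ * w 1, funext fun i ↦ ?_⟩
    rw [Pi.smul_apply, smul_eq_mul]
    by_cases hi : i = 0 ∨ N - 1 < i
    · rw [hwvan i hi, hxvan i hi, mul_zero]
    · rw [mul_assoc, Units.eq_inv_mul_iff_mul_eq, hu, mul_comm (w 1)]
      exact (hcross (by omega) (by omega)).symm
  · rintro ⟨c, rfl⟩ j - -
    simp only [Pi.smul_apply, smul_eq_mul]
    ring

/-- Let `N ≥ 3` and let `x ∈ ℝ^{N-1}` (encoded as a function `ℕ → ℝ` indexed by `1,…,N-1`,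
vanishing at all other indices, so that in particular `x_0 = x_N = 0`) have all entries
strictly positive. The kernel of the transpose `F^⊤ : ℝ^{N-1} → ℝ^{N-2}` of the map `F`,
given explicitly by `(F^⊤ w)_j = x_{j+1} w_j - x_j w_{j+1}` for `1 ≤ j ≤ N-2`, is exactly
the line `ℝ · x` spanned by `x`. -/
theorem ker_F_transpose_eq_span (N : ℕ) (hN : 3 ≤ N) (x : ℕ → ℝ)
    (hxvan : ∀ i, i = 0 ∨ N - 1 < i → x i = 0)
    (hxpos : ∀ i, 1 ≤ i → i ≤ N - 1 → 0 < x i) :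
    ∀ w : ℕ → ℝ, (∀ i, i = 0 ∨ N - 1 < i → w i = 0) →
      ((∀ j, 1 ≤ j → j ≤ N - 2 → x (j + 1) * w j - x j * w (j + 1) = 0) ↔
        ∃ c : ℝ, w = c • x) :=
  ker_F_transpose_eq_span_general N x hxvan (hxpos 1 le_rfl (by omega)).ne'.isUnit
    fun i hi hiN ↦ (IsRegular.of_ne_zero (hxpos i hi.le hiN.le).ne').left
end

section
/- Let N ≥ 2 be an integer, n = ⌊N/2⌋, and let x ∈ ℝ^{N−1} have all entries strictly positive and satisfy x_i = x_{N−i} for all i; set x_0 = x_N = 0. With S : ℝ^{N,0,0} → ℝ^{N−1}, (Sv)_i = v_i + v_{i+1}; T : ℝ^{N−1} → ℝ^{N−2}, (Tv)_i = v_{i+1} − v_i; T_{0,0} : ℝ^{N−1} → ℝ^N, (T_{0,0}v)_1 = (T_{0,0}v)_N = 0 and (T_{0,0}v)_i = v_i − v_{i−1} for 2 ≤ i ≤ N−1; and F : ℝ^{N−2} → ℝ^{N−1}, (Fv)_i = −x_{i−1}v_{i−1} + x_{i+1}v_i (conventions v_0 = v_{N−1} = 0), the linear map from ℝ^{N−1}_{↕+}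 ⊕ ℝ^{N−1}_{↕−} to ℝ^{N−1}_{↕+} ⊕ ℝ^{N,0,0}_{↕+} defined by (ζ, ξ) ↦ (π·F(Tζ) − 4π·ζ_n·x + S(T_{0,0}ξ), (1/2)·T_{0,0}ξ) is a well-defined linear isomorphism. -/
/-! The map is block triangular in `(ζ, ξ)`, so it suffices that its diagonal blocks `T₀₀/2` and
`ζ ↦ π F(Tζ) - 4π ζ_n x` are bijective. A symmetric vector has exactly one antisymmetric primitive,
which handles `T₀₀`. For the other block, an endomorphism of a finite-dimensional space, suppose
`F(Tζ) = 4 ζ_n x`. Since `x_i (F v)_i = x_i x_{i+1} v_i - x_{i-1} x_i v_{i-1}` telescopes, the image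
of `F` is orthogonal to `x`, so `ζ_n = 0`. Then `F(Tζ) = 0` is a first-order recursion forcing
`Tζ = 0`, so `ζ` is constant and vanishes at `n`. -/

section Triangular

variable {α β γ G σ : Type*} [AddGroup G] [SetLike σ G] [AddSubgroupClass σ G]

theorem bijOn_prod_triangular {f : α → G} {g : β → γ} {h : β → G} {s : Set α} {t : Set β}
    {t' : Set γ} {U : σ} (hf : Set.BijOn f s U) (hg : Set.BijOn g t t') (hh : Set.MapsTo h t U) :
    Set.BijOn (fun p : α × β => (f p.1 + h p.2, g p.2)) (s ×ˢ t) ((U : Set G) ×ˢ t') := by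
  refine ⟨fun p hp => ⟨add_mem (hf.mapsTo hp.1) (hh hp.2), hg.mapsTo hp.2⟩, ?_, ?_⟩
  · rintro ⟨p, q⟩ ⟨hp, hq⟩ ⟨p', q'⟩ ⟨hp', hq'⟩ heq
    obtain ⟨hfst, hsnd⟩ := Prod.mk.inj heq
    obtain rfl : q = q' := hg.injOn hq hq' hsnd
    obtain rfl : p = p' := hf.injOn hp hp' (add_right_cancel hfst)
    rfl
  · rintro ⟨y, z⟩ ⟨hy, hz⟩
    obtain ⟨q, hq, rfl⟩ := hg.surjOn hz
    obtain ⟨p, hp, hpy⟩ := hf.surjOn (sub_mem hy (hh hq))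
    exact ⟨(p, q), ⟨hp, hq⟩, Prod.ext (by simp only [hpy, sub_add_cancel]) rfl⟩

end Triangular

section LinearAlgebra

variable {K V : Type*} [DivisionRing K] [AddCommGroup V] [Module K V] (U : Submodule K V)

theorem bijOn_const_smul {c : K} (hc : c ≠ 0) : Set.BijOn (c • · : V → V) U U :=
  Set.InvOn.bijOn (f' := (c⁻¹ • ·))
    ⟨fun v _ => inv_smul_smul₀ hc v, fun v _ => smul_inv_smul₀ hc v⟩
    (fun _ hv => U.smul_mem c hv) (fun _ hv => U.smul_mem c⁻¹ hv)

variable {U}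

theorem bijOn_of_mapsTo_of_ker [FiniteDimensional K U] {f : V →ₗ[K] V} (hf : Set.MapsTo f U U)
    (hker : ∀ v ∈ U, f v = 0 → v = 0) : Set.BijOn f U U := by
  have hinj : Set.InjOn f U := (Set.injOn_iff_map_eq_zero f U).mpr hker
  exact ⟨hf, hinj, (LinearMap.injOn_iff_surjOn hf).mp hinj⟩

end LinearAlgebra

section SymmetricVectors

variable {d i j : ℕ} {ε : ℝ} {v w : ℕ → ℝ}

theorem symSub_apply_eq_zero (hv : v ∈ symSub d ε) (hi : i = 0 ∨ d < i) : v i = 0 :=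
  hv.1 i hi

theorem symSub_apply_of_add_eq (hv : v ∈ symSub d ε) (hij : i + j = d + 1) : v i = ε * v j := by
  by_cases hi : 1 ≤ i ∧ i ≤ d
  · rw [hv.2 i hi.1 hi.2, show d + 1 - i = j by omega]
  · rw [symSub_apply_eq_zero hv (by omega), symSub_apply_eq_zero hv (by omega), mul_zero]

theorem mem_symSub_of_forall_add_eq (hsupp : ∀ i, i = 0 ∨ d < i → v i = 0)
    (hsym : ∀ i j, 1 ≤ i → 1 ≤ j → i + j = d + 1 → v i = ε * v j) : v ∈ symSub d ε :=
  ⟨hsupp, fun i h₁ h₂ => hsym i _ h₁ (by omega) (by omega)⟩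

theorem mem_sub00_iff : w ∈ sub00 d ↔ w ∈ symSub d 1 ∧ w 1 = 0 := by
  refine ⟨fun ⟨hsupp, hfirst, _, hsym⟩ => ⟨⟨hsupp, fun i h₁ h₂ => ?_⟩, hfirst⟩,
    fun ⟨hw, hfirst⟩ => ⟨hw.1, hfirst, ?_, fun i h₁ h₂ => ?_⟩⟩
  · rw [one_mul, hsym i h₁ h₂]
  · rw [symSub_apply_of_add_eq hw rfl, hfirst, mul_zero]
  · rw [hw.2 i h₁ h₂, one_mul]

instance finiteDimensional_symSub : FiniteDimensional ℝ (symSub d ε) := by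
  let restrict : symSub d ε →ₗ[ℝ] (Fin (d + 1) → ℝ) :=
    LinearMap.funLeft ℝ ℝ Fin.val ∘ₗ (symSub d ε).subtype
  refine FiniteDimensional.of_injective restrict fun v w hvw => Subtype.ext (funext fun i => ?_)
  by_cases hi : i < d + 1
  · exact congrFun hvw ⟨i, hi⟩
  · rw [symSub_apply_eq_zero v.2 (by omega), symSub_apply_eq_zero w.2 (by omega)]

end SymmetricVectors

section Differences

variable {d i j : ℕ} {ε : ℝ} {v w : ℕ → ℝ}

theorem Dmap_apply : Dmap d v i = if 1 ≤ i ∧ i ≤ d then v (i + 1) - v i else 0 := rfl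

theorem T00map_apply_zero : T00map (d + 2) v 0 = 0 := rfl

theorem T00map_apply_succ : T00map (d + 2) v (i + 1) = Dmap d v i :=
  if_congr (by omega) rfl rfl

theorem Dmap_mem_symSub (hv : v ∈ symSub (d + 1) ε) : Dmap d v ∈ symSub d (-ε) := by
  refine mem_symSub_of_forall_add_eq (fun i hi => if_neg (by omega)) fun i j hi hj hij => ?_
  rw [Dmap_apply, Dmap_apply, if_pos (by omega), if_pos (by omega),
    symSub_apply_of_add_eq hv (by omega : i + (j + 1) = d + 2),
    symSub_apply_of_add_eq hv (by omega : i + 1 + j = d + 2)]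
  ring

theorem apply_eq_apply_of_Dmap_eq_zero (h : Dmap d v = 0) (hi : 1 ≤ i ∧ i ≤ d + 1)
    (hj : 1 ≤ j ∧ j ≤ d + 1) : v i = v j := by
  have eq_first : ∀ k, 1 ≤ k → k ≤ d + 1 → v k = v 1 := by
    intro k hk
    induction k, hk using Nat.le_induction with
    | base => exact fun _ => rfl
    | succ k hk ih =>
      intro hkd
      have hdiff : v (k + 1) - v k = 0 := (if_pos ⟨hk, by omega⟩).symm.trans (congrFun h k)
      rw [sub_eq_zero.mp hdiff, ih (by omega)]
  rw [eq_first i hi.1 hi.2, eq_first j hj.1 hj.2]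

theorem eq_zero_of_Dmap_eq_zero (hv : v ∈ symSub (d + 1) ε) (h : Dmap d v = 0)
    (hi : 1 ≤ i ∧ i ≤ d + 1) (hvi : v i = 0) : v = 0 := by
  funext j
  by_cases hj : 1 ≤ j ∧ j ≤ d + 1
  · rw [apply_eq_apply_of_Dmap_eq_zero h hj hi, hvi, Pi.zero_apply]
  · exact symSub_apply_eq_zero hv (by omega)

theorem Dmap_injOn_symSub_neg_one : Set.InjOn (Dmap d) (symSub (d + 1) (-1)) := by
  refine (Set.injOn_iff_map_eq_zero _ _).mpr fun v hv h => ?_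
  have hanti : v 1 = -1 * v (d + 1) := symSub_apply_of_add_eq hv (by omega)
  have hconst : v (d + 1) = v 1 := apply_eq_apply_of_Dmap_eq_zero h (by omega) (by omega)
  exact eq_zero_of_Dmap_eq_zero hv h (i := 1) (by omega) (by linarith)

theorem Dmap_surjOn_symSub_one :
    Set.SurjOn (Dmap d) (symSub (d + 1) (-1)) (symSub d 1) := by
  intro u hu
  -- As `u` is symmetric, the antisymmetric `(s i - s (d + 2 - i)) / 2` has the differences of `s`.
  let s : ℕ → ℝ := fun i => ∑ k ∈ Finset.range i, u k
  have hs (i : ℕ) : s (i + 1) = s i + u i := Finset.sum_range_succ u i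
  refine ⟨fun i => if 1 ≤ i ∧ i ≤ d + 1 then (s i - s (d + 2 - i)) / 2 else 0,
    ⟨fun i hi => if_neg (by omega), fun i h₁ h₂ => ?_⟩, funext fun i => ?_⟩
  · beta_reduce
    rw [if_pos ⟨h₁, h₂⟩, if_pos (by omega), show d + 2 - (d + 1 + 1 - i) = i by omega]
    ring
  · rw [Dmap_apply]
    by_cases hi : 1 ≤ i ∧ i ≤ d
    · have hsym : u i = 1 * u (d + 1 - i) := symSub_apply_of_add_eq hu (by omega)
      rw [if_pos hi, if_pos (by omega), if_pos (by omega), hs,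
        show d + 2 - (i + 1) = d + 1 - i by omega, show d + 2 - i = d + 1 - i + 1 by omega, hs]
      linarith
    · rw [if_neg hi, symSub_apply_eq_zero hu (by omega)]

theorem T00map_mapsTo : Set.MapsTo (T00map (d + 2)) (symSub (d + 1) (-1)) (sub00 (d + 2)) := by
  intro v hv
  refine mem_sub00_iff.mpr ⟨mem_symSub_of_forall_add_eq (fun i hi => if_neg (by omega)) ?_, rfl⟩
  rintro (_ | i) (_ | j) hi hj hij
  iterate 3 contradiction
  rw [T00map_apply_succ, T00map_apply_succ,
    symSub_apply_of_add_eq (Dmap_mem_symSub hv) (by omega : i + j = d + 1), neg_neg]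

theorem shift_mem_symSub_of_mem_sub00 (hw : w ∈ sub00 (d + 2)) :
    (fun i => w (i + 1)) ∈ symSub d 1 := by
  obtain ⟨hsym, hfirst⟩ := mem_sub00_iff.mp hw
  refine mem_symSub_of_forall_add_eq (fun i hi => ?_) fun i j _ _ hij =>
    symSub_apply_of_add_eq hsym (by omega)
  obtain rfl | rfl | hi : i = 0 ∨ i = d + 1 ∨ d + 1 < i := by omega
  · exact hfirst
  · exact hw.2.2.1
  · exact symSub_apply_eq_zero hsym (by omega)

theorem T00map_bijOn : Set.BijOn (T00map (d + 2)) (symSub (d + 1) (-1)) (sub00 (d + 2)) := by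
  refine ⟨T00map_mapsTo, fun v hv v' hv' h => Dmap_injOn_symSub_neg_one hv hv' (funext fun i => ?_),
    fun w hw => ?_⟩
  · rw [← T00map_apply_succ, h, T00map_apply_succ]
  · obtain ⟨v, hv, hvw⟩ := Dmap_surjOn_symSub_one (shift_mem_symSub_of_mem_sub00 hw)
    refine ⟨v, hv, funext fun i => ?_⟩
    cases i with
    | zero => rw [T00map_apply_zero, hw.1 0 (Or.inl rfl)]
    | succ i => rw [T00map_apply_succ, hvw]

end Differences

section Forces

variable {d i n : ℕ} {a b c δ ε : ℝ} {x v w ζ : ℕ → ℝ}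

theorem Smap_apply : Smap (d + 1) w i = if 1 ≤ i ∧ i ≤ d then w i + w (i + 1) else 0 := rfl

theorem Smap_mem_symSub (hw : w ∈ symSub (d + 1) ε) : Smap (d + 1) w ∈ symSub d ε := by
  refine mem_symSub_of_forall_add_eq (fun i hi => if_neg (by omega)) fun i j hi hj hij => ?_
  rw [Smap_apply, Smap_apply, if_pos (by omega), if_pos (by omega),
    symSub_apply_of_add_eq hw (by omega : i + (j + 1) = d + 2),
    symSub_apply_of_add_eq hw (by omega : i + 1 + j = d + 2)]
  ring

theorem Fmap_apply_succ (hi : i ≤ d) :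
    Fmap (d + 2) x v (i + 1) = -x i * v i + x (i + 2) * v (i + 1) :=
  if_pos (by omega)

theorem Fmap_mem_symSub (hx : x ∈ symSub (d + 1) δ) (hv : v ∈ symSub d ε) :
    Fmap (d + 2) x v ∈ symSub (d + 1) (-(δ * ε)) := by
  refine mem_symSub_of_forall_add_eq (fun i hi => if_neg (by omega)) ?_
  rintro (_ | i) (_ | j) hi hj hij
  iterate 3 contradiction
  rw [Fmap_apply_succ (by omega), Fmap_apply_succ (by omega),
    symSub_apply_of_add_eq hx (by omega : i + (j + 2) = d + 2),
    symSub_apply_of_add_eq hv (by omega : i + (j + 1) = d + 1),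
    symSub_apply_of_add_eq hx (by omega : i + 2 + j = d + 2),
    symSub_apply_of_add_eq hv (by omega : i + 1 + j = d + 1)]
  ring

theorem sum_mul_Fmap_eq_zero (hx_zero : x 0 = 0) (hx_last : x (d + 2) = 0) :
    ∑ i ∈ Finset.range (d + 1), x (i + 1) * Fmap (d + 2) x v (i + 1) = 0 := by
  let g : ℕ → ℝ := fun i => x i * x (i + 1) * v i
  calc
    _ = ∑ i ∈ Finset.range (d + 1), (g (i + 1) - g i) := by
      refine Finset.sum_congr rfl fun i hi => ?_
      rw [Fmap_apply_succ (Finset.mem_range_succ_iff.mp hi)]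
      ring
    _ = g (d + 1) - g 0 := Finset.sum_range_sub g (d + 1)
    _ = 0 := by simp only [g, hx_zero, hx_last, mul_zero, zero_mul, sub_zero]

theorem eq_zero_of_Fmap_eq_smul (hx_zero : x 0 = 0) (hx_last : x (d + 2) = 0) (hi : i ≤ d)
    (hxi : x (i + 1) ≠ 0) (h : Fmap (d + 2) x v = c • x) : c = 0 := by
  have horth : c * ∑ k ∈ Finset.range (d + 1), x (k + 1) ^ 2 = 0 := by
    rw [← sum_mul_Fmap_eq_zero (v := v) hx_zero hx_last, h, Finset.mul_sum]
    refine Finset.sum_congr rfl fun k _ => ?_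
    rw [Pi.smul_apply, smul_eq_mul]
    ring
  have hpos : 0 < ∑ k ∈ Finset.range (d + 1), x (k + 1) ^ 2 :=
    Finset.sum_pos' (fun k _ => sq_nonneg _)
      ⟨i, Finset.mem_range_succ_iff.mpr hi, sq_pos_of_ne_zero hxi⟩
  exact (mul_eq_zero.mp horth).resolve_right hpos.ne'

theorem eq_zero_of_Fmap_eq_zero (hx : ∀ i, 2 ≤ i → i ≤ d + 1 → x i ≠ 0) (hv : v ∈ symSub d ε)
    (h : Fmap (d + 2) x v = 0) : v = 0 := by
  funext i
  by_cases hi : i ≤ d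
  · induction i with
    | zero => exact symSub_apply_eq_zero hv (Or.inl rfl)
    | succ i ih =>
      have hrec : -x i * v i + x (i + 2) * v (i + 1) = 0 := by
        rw [← Fmap_apply_succ (Nat.le_of_succ_le hi), h, Pi.zero_apply]
      rw [ih (by omega), Pi.zero_apply, mul_zero, zero_add] at hrec
      exact (mul_eq_zero.mp hrec).resolve_left (hx (i + 2) (by omega) (by omega))
  · exact symSub_apply_eq_zero hv (by omega)

/-- The `ζ`-component `ζ ↦ a F(Tζ) - b ζ_n x` of the map controlling the forces; the paper has
`a = π`, `b = 4π` and `n = ⌊N/2⌋`. -/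
def forceMap (N n : ℕ) (a b : ℝ) (x : ℕ → ℝ) : (ℕ → ℝ) →ₗ[ℝ] (ℕ → ℝ) :=
  a • (Fmap N x ∘ₗ Dmap (N - 2)) - b • (LinearMap.proj n : (ℕ → ℝ) →ₗ[ℝ] ℝ).smulRight x

theorem forceMap_apply {N : ℕ} :
    forceMap N n a b x ζ = a • Fmap N x (Dmap (N - 2) ζ) - (b * ζ n) • x := by
  rw [← smul_smul]
  rfl

theorem forceMap_mapsTo (hx : x ∈ symSub (d + 1) 1) :
    Set.MapsTo (forceMap (d + 2) n a b x) (symSub (d + 1) 1) (symSub (d + 1) 1) := by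
  intro ζ hζ
  have hF : Fmap (d + 2) x (Dmap d ζ) ∈ symSub (d + 1) 1 := by
    simpa only [one_mul, neg_neg] using Fmap_mem_symSub hx (Dmap_mem_symSub hζ)
  rw [forceMap_apply]
  exact sub_mem (Submodule.smul_mem _ a hF) (Submodule.smul_mem _ _ hx)

theorem eq_zero_of_forceMap_eq_zero (ha : a ≠ 0) (hb : b ≠ 0) (hn : 1 ≤ n ∧ n ≤ d + 1)
    (hx : x ∈ symSub (d + 1) δ) (hx_ne : ∀ i, 1 ≤ i → i ≤ d + 1 → x i ≠ 0)
    (hζ : ζ ∈ symSub (d + 1) ε) (h : forceMap (d + 2) n a b x ζ = 0) : ζ = 0 := by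
  have heq : Fmap (d + 2) x (a • Dmap d ζ) = (b * ζ n) • x := by
    rwa [forceMap_apply, sub_eq_zero, ← map_smul] at h
  have hcoeff : b * ζ n = 0 :=
    eq_zero_of_Fmap_eq_smul (symSub_apply_eq_zero hx (by omega))
      (symSub_apply_eq_zero hx (by omega)) d.zero_le (hx_ne 1 le_rfl (by omega)) heq
  have hdiff : a • Dmap d ζ = 0 :=
    eq_zero_of_Fmap_eq_zero (fun i hi => hx_ne i (by omega))
      (Submodule.smul_mem _ a (Dmap_mem_symSub hζ)) (by rw [heq, hcoeff, zero_smul])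
  exact eq_zero_of_Dmap_eq_zero hζ ((smul_eq_zero.mp hdiff).resolve_left ha) hn
    ((mul_eq_zero.mp hcoeff).resolve_left hb)

theorem forceMap_bijOn (ha : a ≠ 0) (hb : b ≠ 0) (hn : 1 ≤ n ∧ n ≤ d + 1)
    (hx : x ∈ symSub (d + 1) 1) (hx_ne : ∀ i, 1 ≤ i → i ≤ d + 1 → x i ≠ 0) :
    Set.BijOn (forceMap (d + 2) n a b x) (symSub (d + 1) 1) (symSub (d + 1) 1) :=
  bijOn_of_mapsTo_of_ker (forceMap_mapsTo hx) fun _ hζ =>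
    eq_zero_of_forceMap_eq_zero ha hb hn hx hx_ne hζ

end Forces

theorem forces_dislocations_iso_general (N n : ℕ) (hn : 1 ≤ n) (hnN : n ≤ N - 1) {a b c : ℝ}
    (ha : a ≠ 0) (hb : b ≠ 0) (hc : c ≠ 0) (x : ℕ → ℝ)
    (hxvan : ∀ i, i = 0 ∨ N - 1 < i → x i = 0)
    (hxne : ∀ i, 1 ≤ i → i ≤ N - 1 → x i ≠ 0)
    (hxsym : ∀ i, 1 ≤ i → i ≤ N - 1 → x i = x (N - i))
    (P : (ℕ → ℝ) × (ℕ → ℝ) → (ℕ → ℝ) × (ℕ → ℝ))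
    (hP : ∀ ζ ξ : ℕ → ℝ, P (ζ, ξ) =
      (a • Fmap N x (Dmap (N - 2) ζ) - (b * ζ n) • x + Smap N (T00map N ξ), c • T00map N ξ)) :
    IsLinearMap ℝ P ∧
    Set.BijOn P
      ((symSub (N - 1) 1 : Set (ℕ → ℝ)) ×ˢ (symSub (N - 1) (-1) : Set (ℕ → ℝ)))
      ((symSub (N - 1) 1 : Set (ℕ → ℝ)) ×ˢ (sub00 N : Set (ℕ → ℝ))) := by
  obtain ⟨d, rfl⟩ : ∃ d, N = d + 2 := Nat.exists_eq_add_of_le' (by omega)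
  let T := T00map (d + 2)
  let A := forceMap (d + 2) n a b x
  let S := Smap (d + 2) ∘ₗ T
  obtain rfl : P = fun p => (A p.1 + S p.2, (c • T) p.2) :=
    funext fun p => (hP p.1 p.2).trans (by rw [← forceMap_apply]; rfl)
  have hx : x ∈ symSub (d + 1) 1 :=
    ⟨hxvan, fun i h₁ h₂ => (hxsym i h₁ h₂).trans (one_mul _).symm⟩
  have hA : Set.BijOn A (symSub (d + 1) 1) (symSub (d + 1) 1) :=
    forceMap_bijOn ha hb ⟨hn, hnN⟩ hx hxne
  have hT : Set.BijOn (c • T) (symSub (d + 1) (-1)) (sub00 (d + 2)) :=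
    (bijOn_const_smul (sub00 (d + 2)) hc).comp T00map_bijOn
  have hS : Set.MapsTo S (symSub (d + 1) (-1)) (symSub (d + 1) 1) := fun _ hξ =>
    Smap_mem_symSub (mem_sub00_iff.mp (T00map_mapsTo hξ)).1
  exact ⟨((A.coprod S).prod ((c • T) ∘ₗ LinearMap.snd ℝ _ _)).isLinear,
    bijOn_prod_triangular hA hT hS⟩

/-- **Control of forces and dislocations** (the algebraic core of Lemma A.3): with
`n = ⌊N/2⌋` and `x ∈ ℝ^{N-1}` entrywise positive and symmetric, the linear map
`(ζ, ξ) ↦ (π·F(Tζ) - 4π·ζ_n·x + S(T₀₀ ξ), (1/2)·T₀₀ ξ)` is a well-defined linear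
isomorphism from `ℝ^{N-1}_{↕+} ⊕ ℝ^{N-1}_{↕-}` onto `ℝ^{N-1}_{↕+} ⊕ ℝ^{N,0,0}_{↕+}`. -/
theorem forces_dislocations_iso (N : ℕ) (hN : 2 ≤ N) (x : ℕ → ℝ)
    (hxvan : ∀ i, i = 0 ∨ N - 1 < i → x i = 0)
    (hxpos : ∀ i, 1 ≤ i → i ≤ N - 1 → 0 < x i)
    (hxsym : ∀ i, 1 ≤ i → i ≤ N - 1 → x i = x (N - i))
    (P : (ℕ → ℝ) × (ℕ → ℝ) → (ℕ → ℝ) × (ℕ → ℝ))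
    (hP : ∀ ζ ξ : ℕ → ℝ, P (ζ, ξ) =
      (Real.pi • Fmap N x (Dmap (N - 2) ζ) - (4 * Real.pi * ζ (N / 2)) • x
          + Smap N (T00map N ξ),
        (1 / 2 : ℝ) • T00map N ξ)) :
    IsLinearMap ℝ P ∧
    Set.BijOn P
      ((symSub (N - 1) 1 : Set (ℕ → ℝ)) ×ˢ (symSub (N - 1) (-1) : Set (ℕ → ℝ)))
      ((symSub (N - 1) 1 : Set (ℕ → ℝ)) ×ˢ (sub00 N : Set (ℕ → ℝ))) :=
  forces_dislocations_iso_general N (N / 2) (by omega) (by omega) Real.pi_ne_zero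
    (by positivity) (by norm_num) x hxvan (fun i h₁ h₂ => (hxpos i h₁ h₂).ne') hxsym P hP
end

section
/- There exists T_0 > 0 such that for every T > T_0 the equation tanh(γT) = γ·coth(T) has exactly one solution γ = γ(T) in (0, ∞); this solution satisfies 0 < γ(T) < 1; and γ(T) → 1 as T → ∞. -/
/-!
Since `tanh` is strictly concave on `[0, ∞)` and vanishes at `0`, the quotient `tanh x / x` is
strictly decreasing for `x > 0`; substituting `x = γ * T`, the equation has at most one positive
root. A positive root satisfies `γ < γ * coth T = tanh (γ * T) < 1`. Conversely, for fixed
`c ∈ (0, 1)` we have `c * coth T → c < 1` and `tanh (c * T) → 1` as `T → ∞`, while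
`tanh T < 1 < coth T`, so for large `T` the intermediate value theorem yields a root in `(c, 1)`.
The case of a single `c` gives existence, and letting `c → 1` gives the limit.
-/

open Filter Real Set Topology

lemma hasDerivAt_tanh (x : ℝ) : HasDerivAt tanh (1 / cosh x ^ 2) x := by
  have h := (hasDerivAt_sinh x).div (hasDerivAt_cosh x) (cosh_pos x).ne'
  rw [← sq, ← sq, cosh_sq_sub_sinh_sq] at h
  exact h.congr_of_eventuallyEq (.of_forall tanh_eq_sinh_div_cosh)

lemma continuous_tanh : Continuous tanh :=
  continuous_iff_continuousAt.2 fun x => (hasDerivAt_tanh x).continuousAt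

lemma strictMono_tanh : StrictMono tanh := by
  refine strictMono_of_deriv_pos fun x => ?_
  rw [(hasDerivAt_tanh x).deriv]
  exact one_div_pos.2 (pow_pos (cosh_pos x) 2)

lemma strictConcaveOn_tanh_Ici : StrictConcaveOn ℝ (Ici 0) tanh := by
  refine StrictAntiOn.strictConcaveOn_of_deriv (convex_Ici 0) continuous_tanh.continuousOn ?_
  intro x hx y hy hxy
  rw [interior_Ici] at hx hy
  have hcosh : cosh x < cosh y :=
    cosh_strictMonoOn (Ioi_subset_Ici_self hx) (Ioi_subset_Ici_self hy) hxy
  rw [(hasDerivAt_tanh x).deriv, (hasDerivAt_tanh y).deriv]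
  have := cosh_pos x
  gcongr

lemma strictAntiOn_tanh_div_self : StrictAntiOn (fun x => tanh x / x) (Ioi 0) := by
  intro x hx y hy hxy
  simpa only [tanh_zero, sub_zero] using
    strictConcaveOn_tanh_Ici.secant_strict_mono self_mem_Ici (Ioi_subset_Ici_self hx)
      (Ioi_subset_Ici_self hy) (ne_of_gt hx) (ne_of_gt hy) hxy

lemma tendsto_tanh_atTop : Tendsto tanh atTop (𝓝 1) := by
  refine tendsto_atTop_isLUB strictMono_tanh.monotone ?_
  rw [← image_univ, tanh_bijOn.image_eq]
  exact isLUB_Ioo (by norm_num)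

lemma one_lt_cosh_div_sinh {x : ℝ} (hx : 0 < x) : 1 < cosh x / sinh x :=
  (one_lt_div (sinh_pos_iff.2 hx)).2 (sinh_lt_cosh x)

lemma tendsto_cosh_div_sinh_atTop : Tendsto (fun x => cosh x / sinh x) atTop (𝓝 1) := by
  simpa only [tanh_eq_sinh_div_cosh, inv_div, inv_one] using tendsto_tanh_atTop.inv₀ one_ne_zero

/-- `γ` is a positive solution of `tanh (γ * T) = γ * coth T`, the characteristic equation for the
eigenvalue `-γ ^ 2` of `d²/dt² + 2 sech² t` on even functions on `[-T, T]` vanishing at `±T`.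
We write `coth T` as `cosh T / sinh T`. -/
def IsDirichletRoot (T γ : ℝ) : Prop :=
  0 < γ ∧ tanh (γ * T) = γ * (cosh T / sinh T)

/-- The function `T ↦ γ(T)`: some positive root of the characteristic equation on `[-T, T]`.
Its value is arbitrary if there is no such root. -/
noncomputable def dirichletRoot (T : ℝ) : ℝ :=
  Classical.epsilon (IsDirichletRoot T)

lemma isDirichletRoot_dirichletRoot {T : ℝ} (h : ∃ γ, IsDirichletRoot T γ) :
    IsDirichletRoot T (dirichletRoot T) :=
  Classical.epsilon_spec h

namespace IsDirichletRoot

variable {T γ δ : ℝ}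

lemma lt_one (hT : 0 < T) (h : IsDirichletRoot T γ) : γ < 1 :=
  calc
    γ < γ * (cosh T / sinh T) := lt_mul_of_one_lt_right h.1 (one_lt_cosh_div_sinh hT)
    _ = tanh (γ * T) := h.2.symm
    _ < 1 := tanh_lt_one _

lemma unique (hT : 0 < T) (hγ : IsDirichletRoot T γ) (hδ : IsDirichletRoot T δ) : γ = δ := by
  have quotient_eq {r : ℝ} (hr : IsDirichletRoot T r) :
      tanh (r * T) / (r * T) = cosh T / sinh T / T := by
    rw [hr.2, mul_div_mul_left _ _ hr.1.ne']
  have heq : γ * T = δ * T :=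
    strictAntiOn_tanh_div_self.injOn (mul_pos hγ.1 hT) (mul_pos hδ.1 hT)
      ((quotient_eq hγ).trans (quotient_eq hδ).symm)
  exact mul_right_cancel₀ hT.ne' heq

lemma eq_dirichletRoot (hT : 0 < T) (h : IsDirichletRoot T γ) : γ = dirichletRoot T :=
  h.unique hT (isDirichletRoot_dirichletRoot ⟨γ, h⟩)

end IsDirichletRoot

lemma exists_mem_Ioo_tanh_mul_eq_mul {T k c : ℝ} (hk : 1 ≤ k) (hck : c * k < tanh (c * T)) :
    ∃ γ ∈ Ioo c 1, tanh (γ * T) = γ * k := by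
  have hc : c < 1 := by
    refine lt_of_mul_lt_mul_right (a := k) ?_ (zero_le_one.trans hk)
    linarith [tanh_lt_one (c * T)]
  have hcont : Continuous fun γ => γ * k - tanh (γ * T) :=
    (continuous_mul_const k).sub (continuous_tanh.comp (continuous_mul_const T))
  have h_left : c * k - tanh (c * T) < 0 := sub_neg.2 hck
  have h_right : 0 < 1 * k - tanh (1 * T) := by linarith [tanh_lt_one (1 * T)]
  obtain ⟨γ, hγ, hγ0⟩ := intermediate_value_Ioo hc.le hcont.continuousOn ⟨h_left, h_right⟩
  exact ⟨γ, hγ, (sub_eq_zero.1 hγ0).symm⟩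

lemma eventually_mul_cosh_div_sinh_lt_tanh_mul {c : ℝ} (hc₀ : 0 < c) (hc₁ : c < 1) :
    ∀ᶠ T in atTop, c * (cosh T / sinh T) < tanh (c * T) := by
  have h_left : Tendsto (fun T => c * (cosh T / sinh T)) atTop (𝓝 c) := by
    simpa only [mul_one] using tendsto_cosh_div_sinh_atTop.const_mul c
  have h_right : Tendsto (fun T => tanh (c * T)) atTop (𝓝 1) :=
    tendsto_tanh_atTop.comp (tendsto_id.const_mul_atTop hc₀)
  exact h_left.eventually_lt h_right hc₁

lemma eventually_exists_isDirichletRoot_gt {c : ℝ} (hc : c < 1) :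
    ∀ᶠ T in atTop, ∃ γ, c < γ ∧ IsDirichletRoot T γ := by
  obtain ⟨d, hd, hd₁⟩ := exists_between (max_lt hc one_pos)
  obtain ⟨hcd, hd₀⟩ := max_lt_iff.1 hd
  filter_upwards [eventually_mul_cosh_div_sinh_lt_tanh_mul hd₀ hd₁, eventually_gt_atTop 0]
    with T hdT hT
  obtain ⟨γ, hγ, hroot⟩ := exists_mem_Ioo_tanh_mul_eq_mul (one_lt_cosh_div_sinh hT).le hdT
  exact ⟨γ, hcd.trans hγ.1, hd₀.trans hγ.1, hroot⟩

lemma eventually_isDirichletRoot_dirichletRoot :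
    ∀ᶠ T in atTop, IsDirichletRoot T (dirichletRoot T) :=
  (eventually_exists_isDirichletRoot_gt one_pos).mono
    fun _ ⟨γ, _, hγ⟩ => isDirichletRoot_dirichletRoot ⟨γ, hγ⟩

lemma tendsto_dirichletRoot_atTop : Tendsto dirichletRoot atTop (𝓝 1) := by
  refine tendsto_order.2 ⟨fun c hc => ?_, fun c hc => ?_⟩
  · filter_upwards [eventually_exists_isDirichletRoot_gt hc, eventually_gt_atTop 0]
      with T ⟨γ, hcγ, hγ⟩ hT
    exact hcγ.trans_eq (hγ.eq_dirichletRoot hT)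
  · filter_upwards [eventually_isDirichletRoot_dirichletRoot, eventually_gt_atTop 0] with T h hT
    exact (h.lt_one hT).trans hc

/-- There exists `T₀ > 0` such that for every `T > T₀` the equation
`tanh(γT) = γ·coth(T)` has exactly one solution `γ = γ(T)` in `(0,∞)`, this solution
satisfies `0 < γ(T) < 1`, and `γ(T) → 1` as `T → ∞`.  (Here `coth T = cosh T / sinh T`.) -/
theorem dirichlet_eigenvalue_equation_unique_root :
    ∃ T₀ : ℝ, 0 < T₀ ∧ ∃ g : ℝ → ℝ,
      (∀ T : ℝ, T₀ < T →
        (0 < g T ∧ g T < 1 ∧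
          Real.tanh (g T * T) = g T * (Real.cosh T / Real.sinh T)) ∧
        ∀ γ : ℝ, 0 < γ →
          Real.tanh (γ * T) = γ * (Real.cosh T / Real.sinh T) → γ = g T) ∧
      Filter.Tendsto g Filter.atTop (nhds 1) := by
  obtain ⟨T₀, hT₀, hroot⟩ :=
    (atTop_basis_Ioi' 0).eventually_iff.1 eventually_isDirichletRoot_dirichletRoot
  refine ⟨T₀, hT₀, dirichletRoot, fun T hT => ?_, tendsto_dirichletRoot_atTop⟩
  have hT_pos : 0 < T := hT₀.trans hT
  obtain ⟨hpos, heq⟩ := hroot hT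
  exact ⟨⟨hpos, (hroot hT).lt_one hT_pos, heq⟩,
    fun γ hγ hγ_eq => IsDirichletRoot.eq_dirichletRoot hT_pos ⟨hγ, hγ_eq⟩⟩
end

section
/- There exists T_0 > 0 such that for every T > T_0 the function f_T(γ) = γ² − γ·coth(γT)·tanh(T) − sech²(T) satisfies: f_T(γ) < 0 for all γ ∈ (0,1]; f_T is strictly increasing on (1,∞); f_T has exactly one zero γ(T) in (0,∞), and this zero lies in (1,∞); moreover γ(T) → 1 as T → ∞. -/
/-- The function `f_T(γ) = γ² - γ·coth(γT)·tanh(T) - sech²(T)`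
(with `coth s = cosh s / sinh s` and `sech T = (cosh T)⁻¹`). -/
noncomputable def fNeumannEven (T γ : ℝ) : ℝ :=
  γ ^ 2 - γ * (Real.cosh (γ * T) / Real.sinh (γ * T)) * Real.tanh T - ((Real.cosh T)⁻¹) ^ 2

/-!
Put `c(γ) = coth(γT) / coth(T)`, so that `f_T(γ) = γ (γ - c(γ)) - sech²(T)`. Since `coth` is
strictly decreasing on `(0, ∞)`, the factor `γ - c(γ)` is strictly increasing there, and it
vanishes at `γ = 1`. Thus `f_T < 0` on `(0, 1]`, while on `[1, ∞)` the term `γ (γ - c(γ))` is a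
product of nonnegative strictly increasing functions, so `f_T` is strictly increasing. As
`f_T(1 + s) ≥ (1 + s) s - s ≥ 0` for `s = sech²(T)`, the zero lies in `(1, 1 + sech²(T)]`, an
interval which shrinks to `1` as `T → ∞`.
-/

open Real Set Filter Topology

lemma tanh_pos_of_pos {x : ℝ} (hx : 0 < x) : 0 < tanh x := by
  rw [tanh_eq_sinh_div_cosh]
  exact div_pos (sinh_pos_iff.2 hx) (cosh_pos x)

lemma strictAntiOn_cosh_div_sinh : StrictAntiOn (fun x : ℝ ↦ cosh x / sinh x) (Ioi 0) := by
  intro x hx y hy hxy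
  have h_sinh_sub : 0 < sinh y * cosh x - cosh y * sinh x := by
    rw [← sinh_sub]
    exact sinh_pos_iff.2 (sub_pos.2 hxy)
  refine (div_lt_div_iff₀ (sinh_pos_iff.2 hy) (sinh_pos_iff.2 hx)).2 ?_
  linarith

lemma tendsto_cosh_atTop : Tendsto cosh atTop atTop := by
  refine tendsto_atTop_mono' atTop ?_ tendsto_id
  filter_upwards [eventually_ge_atTop 0] with x hx
  exact (self_le_sinh_iff.2 hx).trans (sinh_lt_cosh x).le

/-- The quotient `coth(γT) / coth(T)`, written as `coth(γT) · tanh(T)` as in `fNeumannEven`. -/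
noncomputable def cothRatio (T γ : ℝ) : ℝ :=
  cosh (γ * T) / sinh (γ * T) * tanh T

lemma fNeumannEven_eq (T γ : ℝ) :
    fNeumannEven T γ = γ * (γ - cothRatio T γ) - (cosh T)⁻¹ ^ 2 := by
  unfold fNeumannEven cothRatio
  ring

lemma cothRatio_one {T : ℝ} (hT : T ≠ 0) : cothRatio T 1 = 1 := by
  have h_sinh : sinh T ≠ 0 := sinh_ne_zero.2 hT
  have h_cosh : cosh T ≠ 0 := (cosh_pos T).ne'
  rw [cothRatio, one_mul, tanh_eq_sinh_div_cosh]
  field_simp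

lemma continuousOn_cothRatio {T : ℝ} (hT : T ≠ 0) : ContinuousOn (cothRatio T) {0}ᶜ := by
  have h_sinh : ∀ γ ∈ ({0}ᶜ : Set ℝ), sinh (γ * T) ≠ 0 :=
    fun _ hγ ↦ sinh_ne_zero.2 (mul_ne_zero hγ hT)
  unfold cothRatio
  fun_prop (disch := assumption)

lemma continuousOn_fNeumannEven {T : ℝ} (hT : T ≠ 0) : ContinuousOn (fNeumannEven T) {0}ᶜ := by
  have h_ratio := continuousOn_cothRatio hT
  rw [funext (fNeumannEven_eq T)]
  fun_prop

section PositiveHalfLength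

variable {T : ℝ} (hT : 0 < T)
include hT

lemma strictAntiOn_cothRatio : StrictAntiOn (cothRatio T) (Ioi 0) := fun _ ha _ hb hab ↦
  mul_lt_mul_of_pos_right
    (strictAntiOn_cosh_div_sinh (mul_pos ha hT) (mul_pos hb hT) (mul_lt_mul_of_pos_right hab hT))
    (tanh_pos_of_pos hT)

lemma strictMonoOn_sub_cothRatio : StrictMonoOn (fun γ ↦ γ - cothRatio T γ) (Ioi 0) :=
  fun _ ha _ hb hab ↦ sub_lt_sub hab (strictAntiOn_cothRatio hT ha hb hab)

lemma one_le_cothRatio {γ : ℝ} (hγ : 0 < γ) (hγ1 : γ ≤ 1) : 1 ≤ cothRatio T γ :=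
  (cothRatio_one hT.ne').ge.trans
    ((strictAntiOn_cothRatio hT).antitoneOn hγ (mem_Ioi.2 one_pos) hγ1)

lemma cothRatio_le_one {γ : ℝ} (hγ : 1 ≤ γ) : cothRatio T γ ≤ 1 :=
  ((strictAntiOn_cothRatio hT).antitoneOn (mem_Ioi.2 one_pos) (one_pos.trans_le hγ) hγ).trans
    (cothRatio_one hT.ne').le

lemma fNeumannEven_neg {γ : ℝ} (hγ : 0 < γ) (hγ1 : γ ≤ 1) : fNeumannEven T γ < 0 := by
  have h_sub : γ - cothRatio T γ ≤ 0 := sub_nonpos.2 (hγ1.trans (one_le_cothRatio hT hγ hγ1))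
  have h_sech : 0 < (cosh T)⁻¹ ^ 2 := pow_pos (inv_pos.2 (cosh_pos T)) 2
  rw [fNeumannEven_eq]
  linarith [mul_nonpos_of_nonneg_of_nonpos hγ.le h_sub]

lemma strictMonoOn_fNeumannEven : StrictMonoOn (fNeumannEven T) (Ici 1) := by
  intro a (ha : 1 ≤ a) b _ hab
  have h_pos : 0 < a := one_pos.trans_le ha
  have h_sub_nonneg : 0 ≤ a - cothRatio T a := sub_nonneg.2 ((cothRatio_le_one hT ha).trans ha)
  have h_sub_lt : a - cothRatio T a < b - cothRatio T b :=
    strictMonoOn_sub_cothRatio hT h_pos (h_pos.trans hab) hab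
  rw [fNeumannEven_eq, fNeumannEven_eq]
  exact sub_lt_sub_right (mul_lt_mul'' hab h_sub_lt h_pos.le h_sub_nonneg) _

lemma fNeumannEven_one_add_sech_sq_nonneg : 0 ≤ fNeumannEven T (1 + (cosh T)⁻¹ ^ 2) := by
  rw [fNeumannEven_eq]
  set s := (cosh T)⁻¹ ^ 2
  have hs : 0 ≤ s := sq_nonneg _
  have h_sub : s ≤ 1 + s - cothRatio T (1 + s) := by
    linarith [cothRatio_le_one hT (le_add_of_nonneg_right hs)]
  calc 0 ≤ (1 + s) * s - s := by linarith [mul_nonneg hs hs]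
    _ ≤ (1 + s) * (1 + s - cothRatio T (1 + s)) - s := by gcongr

lemma exists_mem_Ioc_fNeumannEven_eq_zero :
    ∃ γ ∈ Ioc 1 (1 + (cosh T)⁻¹ ^ 2), fNeumannEven T γ = 0 := by
  have h_cont : ContinuousOn (fNeumannEven T) (Icc 1 (1 + (cosh T)⁻¹ ^ 2)) :=
    (continuousOn_fNeumannEven hT.ne').mono fun _ hγ ↦ (one_pos.trans_le hγ.1).ne'
  exact intermediate_value_Ioc (le_add_of_nonneg_right (sq_nonneg _)) h_cont
    ⟨fNeumannEven_neg hT one_pos le_rfl, fNeumannEven_one_add_sech_sq_nonneg hT⟩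

lemma one_lt_of_fNeumannEven_eq_zero {γ : ℝ} (hγ : 0 < γ) (h_zero : fNeumannEven T γ = 0) :
    1 < γ :=
  lt_of_not_ge fun hγ1 ↦ (fNeumannEven_neg hT hγ hγ1).ne h_zero

lemma eq_of_fNeumannEven_eq_zero {γ δ : ℝ} (hγ : 0 < γ) (hδ : 0 < δ)
    (hγ_zero : fNeumannEven T γ = 0) (hδ_zero : fNeumannEven T δ = 0) : γ = δ :=
  (strictMonoOn_fNeumannEven hT).injOn (one_lt_of_fNeumannEven_eq_zero hT hγ hγ_zero).le
    (one_lt_of_fNeumannEven_eq_zero hT hδ hδ_zero).le (hγ_zero.trans hδ_zero.symm)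

end PositiveHalfLength

lemma tendsto_one_add_sech_sq_atTop : Tendsto (fun T : ℝ ↦ 1 + (cosh T)⁻¹ ^ 2) atTop (𝓝 1) := by
  simpa using (tendsto_cosh_atTop.inv_tendsto_atTop.pow 2).const_add 1

theorem neumann_even_eigenvalue_equation_general :
    ∃ g : ℝ → ℝ,
      (∀ T : ℝ, 0 < T →
        (∀ γ : ℝ, 0 < γ → γ ≤ 1 → fNeumannEven T γ < 0) ∧
        StrictMonoOn (fNeumannEven T) (Ioi 1) ∧
        1 < g T ∧ fNeumannEven T (g T) = 0 ∧
        (∀ γ : ℝ, 0 < γ → fNeumannEven T γ = 0 → γ = g T)) ∧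
      Tendsto g atTop (𝓝 1) := by
  choose! g hg_mem hg_zero using fun (T : ℝ) (hT : 0 < T) ↦ exists_mem_Ioc_fNeumannEven_eq_zero hT
  refine ⟨g, fun T hT ↦ ⟨fun γ ↦ fNeumannEven_neg hT,
    (strictMonoOn_fNeumannEven hT).mono Ioi_subset_Ici_self, (hg_mem T hT).1, hg_zero T hT,
    fun γ hγ h_zero ↦ eq_of_fNeumannEven_eq_zero hT hγ (one_pos.trans (hg_mem T hT).1)
      h_zero (hg_zero T hT)⟩, ?_⟩
  refine tendsto_of_tendsto_of_tendsto_of_le_of_le' tendsto_const_nhds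
    tendsto_one_add_sech_sq_atTop ?_ ?_
  · filter_upwards [eventually_gt_atTop 0] with T hT using (hg_mem T hT).1.le
  · filter_upwards [eventually_gt_atTop 0] with T hT using (hg_mem T hT).2

/-- There exists `T₀ > 0` such that for every `T > T₀`: `f_T < 0` on `(0,1]`; `f_T` is
strictly increasing on `(1,∞)`; `f_T` has exactly one zero `γ(T)` in `(0,∞)`, which lies in
`(1,∞)`; and `γ(T) → 1` as `T → ∞`. -/
theorem neumann_even_eigenvalue_equation :
    ∃ T₀ : ℝ, 0 < T₀ ∧ ∃ g : ℝ → ℝ,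
      (∀ T : ℝ, T₀ < T →
        (∀ γ : ℝ, 0 < γ → γ ≤ 1 → fNeumannEven T γ < 0) ∧
        StrictMonoOn (fNeumannEven T) (Set.Ioi 1) ∧
        1 < g T ∧ fNeumannEven T (g T) = 0 ∧
        (∀ γ : ℝ, 0 < γ → fNeumannEven T γ = 0 → γ = g T)) ∧
      Filter.Tendsto g Filter.atTop (nhds 1) := by
  obtain ⟨g, hg, hg_lim⟩ := neumann_even_eigenvalue_equation_general
  exact ⟨1, one_pos, g, fun T hT ↦ hg T (one_pos.trans hT), hg_lim⟩
end
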